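/- arXiv:2507.14982 — 6 statements merged into one kernel-verified Lean document; each statement's English description precedes it below -/
import Mathlib

section
/- Let N_T ≥ 1 and L ≥ 1 be natural numbers, let P > 0, and let G̃_{ij} ∈ ℂ^{N_T×N_T} be Hermitian matrices for 1 ≤ i ≤ j ≤ L. For any V̂ ∈ ℂ^{N_T×N_T} with Tr(V̂ V̂^H) ≤ P, there exist a natural number N ≤ ⌊√(L(L+1)/2)⌋ and a matrix V' ∈ ℂ^{N_T×N} such that Tr(G̃_{ij} V' V'^H) = Tr(G̃_{ij} V̂ V̂^H) for all 1 ≤ i ≤ j ≤ L and Tr(V' V'^H) ≤ P. In other words, in a MIMO radar system (no communication users) measured by the Bayesian Cramér–Rao bound for L real parameters, at most ⌊√(L(L+1)/2)⌋ beamformers achieve the same Bayesian Fisher information as a full set of N_T beamformers. -/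
open Matrix Finset

noncomputable section

/-- A linear parametrization of Hermitian matrices by real matrices. -/
def hermParam (n : ℕ) : Matrix (Fin n) (Fin n) ℝ →ₗ[ℝ] Matrix (Fin n) (Fin n) ℂ where
  toFun A := Matrix.of fun i j => (⟨A i j + A j i, A i j - A j i⟩ : ℂ)
  map_add' A B := by
    ext i j
    apply Complex.ext <;> simp <;> ring
  map_smul' c A := by
    ext i j
    apply Complex.ext <;> simp <;> ring

lemma hermParam_herm (n : ℕ) (A : Matrix (Fin n) (Fin n) ℝ) : (hermParam n A).IsHermitian := by
  ext i j
  apply Complex.ext <;> simp [hermParam] <;> ring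

lemma hermParam_inj (n : ℕ) (A : Matrix (Fin n) (Fin n) ℝ) (h : hermParam n A = 0) : A = 0 := by
  ext i j
  have h1 := congrFun (congrFun h i) j
  have h2 := congrArg Complex.re h1
  have h3 := congrArg Complex.im h1
  simp [hermParam] at h2 h3
  simp
  linarith

lemma trace_real {m : ℕ} {G X : Matrix (Fin m) (Fin m) ℂ} (hG : G.IsHermitian)
    (hX : X.IsHermitian) : (trace (G * X)).im = 0 := by
  have h : star (trace (G * X)) = trace (G * X) := by
    rw [← trace_conjTranspose, conjTranspose_mul, hG.eq, hX.eq, trace_mul_comm]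
  have := congrArg Complex.im h
  simp at this
  linarith

/-- Existence of a nonzero Hermitian direction annihilated by all constraints. -/
lemma exists_dir {m n : ℕ} {ι : Type} [Fintype ι] (G : ι → Matrix (Fin m) (Fin m) ℂ)
    (hG : ∀ k, (G k).IsHermitian) (V : Matrix (Fin m) (Fin n) ℂ)
    (hc : Fintype.card ι < n * n) :
    ∃ D : Matrix (Fin n) (Fin n) ℂ, D.IsHermitian ∧ D ≠ 0 ∧
      ∀ k, trace (G k * (V * D * Vᴴ)) = 0 := by
  let f : Matrix (Fin n) (Fin n) ℝ →ₗ[ℝ] (ι → ℝ) :=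
    { toFun := fun A k => (trace (G k * (V * hermParam n A * Vᴴ))).re
      map_add' := by
        intro A B
        ext k
        simp [Matrix.mul_add, Matrix.add_mul]
      map_smul' := by
        intro c A
        ext k
        simp }
  have hk : LinearMap.ker f ≠ ⊥ := by
    apply LinearMap.ker_ne_bot_of_finrank_lt
    simpa [Module.finrank_matrix] using hc
  obtain ⟨A, hA, hA0⟩ := (Submodule.ne_bot_iff _).1 hk
  refine ⟨hermParam n A, hermParam_herm n A, fun h => hA0 (hermParam_inj n A h), fun k => ?_⟩
  apply Complex.ext
  · exact congrFun (LinearMap.mem_ker.1 hA) k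
  · exact trace_real (hG k) (isHermitian_mul_mul_conjTranspose V (hermParam_herm n A))

lemma entry {m n : ℕ} (Y : Matrix (Fin m) (Fin n) ℂ) (c : Fin n → ℂ) (a b : Fin m) :
    (Y * diagonal c * Yᴴ) a b = ∑ j, Y a j * c j * star (Y b j) := by
  rw [Matrix.mul_apply]
  simp only [Matrix.mul_diagonal, conjTranspose_apply]

lemma trace_diag_re {m n : ℕ} (Y : Matrix (Fin m) (Fin n) ℂ) (d : Fin n → ℝ)
    (hd : ∀ i, d i ≤ 0) :
    (trace (Y * diagonal (fun i => (d i : ℂ)) * Yᴴ)).re ≤ 0 := by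
  simp only [trace, diag_apply, entry, Complex.re_sum]
  refine Finset.sum_nonpos fun i _ => Finset.sum_nonpos fun j _ => ?_
  have : (Y i j * (d j : ℂ) * star (Y i j)).re = d j * ((Y i j).re^2 + (Y i j).im^2) := by
    simp
    ring
  rw [this]
  exact mul_nonpos_of_nonpos_of_nonneg (hd j) (by positivity)

/-- Direction diagonalised, with a positive entry and nonnegative power gain. -/
lemma exists_diag {m n : ℕ} {ι : Type} [Fintype ι] (G : ι → Matrix (Fin m) (Fin m) ℂ)
    (hG : ∀ k, (G k).IsHermitian) (V : Matrix (Fin m) (Fin n) ℂ)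
    (hc : Fintype.card ι < n * n) :
    ∃ (Y : Matrix (Fin m) (Fin n) ℂ) (d : Fin n → ℝ), Y * Yᴴ = V * Vᴴ ∧
      (∃ i, 0 < d i) ∧ 0 ≤ (trace (Y * diagonal (fun i => (d i : ℂ)) * Yᴴ)).re ∧
      ∀ k, trace (G k * (Y * diagonal (fun i => (d i : ℂ)) * Yᴴ)) = 0 := by
  obtain ⟨D, hD, hD0, hk⟩ := exists_dir G hG V hc
  let U : Matrix (Fin n) (Fin n) ℂ := hD.eigenvectorUnitary
  have hU : U * Uᴴ = 1 := Unitary.mul_star_self_of_mem hD.eigenvectorUnitary.2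
  have hspec : D = U * diagonal (fun i => (hD.eigenvalues i : ℂ)) * Uᴴ := by
    have := hD.spectral_theorem
    rw [Unitary.conjStarAlgAut_apply] at this
    exact this
  obtain ⟨Y, hYdef⟩ : ∃ Y, Y = V * U := ⟨_, rfl⟩
  obtain ⟨e, he⟩ : ∃ e, e = hD.eigenvalues := ⟨_, rfl⟩
  rw [← he] at hspec
  have hYY : Y * Yᴴ = V * Vᴴ := by
    rw [hYdef, conjTranspose_mul, Matrix.mul_assoc, ← Matrix.mul_assoc U, hU, Matrix.one_mul]
  have hYD : V * D * Vᴴ = Y * diagonal (fun i => (e i : ℂ)) * Yᴴ := by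
    rw [hspec, hYdef, conjTranspose_mul]
    simp only [Matrix.mul_assoc]
  rw [hYD] at hk
  have hne : ∃ i, e i ≠ 0 := by
    by_contra! h
    apply hD0
    rw [hspec]
    simp [h]
  have hneg : Y * diagonal (fun i => ((-e i : ℝ) : ℂ)) * Yᴴ
      = -(Y * diagonal (fun i => (e i : ℂ)) * Yᴴ) := by
    have : diagonal (fun i => ((-e i : ℝ) : ℂ)) = -diagonal (fun i => (e i : ℂ)) := by
      rw [diagonal_neg]
      simp
    rw [this, Matrix.mul_neg, Matrix.neg_mul]
  have hkn : ∀ k, trace (G k * (Y * diagonal (fun i => ((-e i : ℝ) : ℂ)) * Yᴴ)) = 0 := by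
    intro k
    rw [hneg, Matrix.mul_neg, trace_neg, hk k, neg_zero]
  have htn : (trace (Y * diagonal (fun i => ((-e i : ℝ) : ℂ)) * Yᴴ)).re =
      -(trace (Y * diagonal (fun i => (e i : ℂ)) * Yᴴ)).re := by
    rw [hneg, trace_neg, Complex.neg_re]
  have A := trace_diag_re Y e
  have B := trace_diag_re Y (fun i => -e i)
  rw [htn] at B
  by_cases hp : ∃ i, 0 < e i
  · by_cases ht : 0 ≤ (trace (Y * diagonal (fun i => (e i : ℂ)) * Yᴴ)).re
    · exact ⟨Y, e, hYY, hp, ht, hk⟩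
    · refine ⟨Y, fun i => -e i, hYY, ?_, by rw [htn]; linarith, hkn⟩
      by_contra! h
      have := B h
      linarith
  · push Not at hp
    obtain ⟨i, hi⟩ := hne
    refine ⟨Y, fun i => -e i, hYY, ⟨i, ?_⟩, by rw [htn]; linarith [A hp], hkn⟩
    have := lt_of_le_of_ne (hp i) hi
    linarith

lemma step {m n : ℕ} {ι : Type} [Fintype ι] (G : ι → Matrix (Fin m) (Fin m) ℂ)
    (hG : ∀ k, (G k).IsHermitian) (V : Matrix (Fin m) (Fin (n + 1)) ℂ)
    (hc : Fintype.card ι < (n + 1) * (n + 1)) :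
    ∃ V' : Matrix (Fin m) (Fin n) ℂ,
      (∀ k, trace (G k * (V' * V'ᴴ)) = trace (G k * (V * Vᴴ))) ∧
      (trace (V' * V'ᴴ)).re ≤ (trace (V * Vᴴ)).re := by
  obtain ⟨Y, d, hY, ⟨i1, hi1⟩, ht, hk⟩ := exists_diag G hG V hc
  obtain ⟨i0, hi0⟩ := Finite.exists_max d
  have hpos : 0 < d i0 := lt_of_lt_of_le hi1 (hi0 i1)
  let V' : Matrix (Fin m) (Fin n) ℂ :=
    Matrix.of fun a j => Y a (i0.succAbove j) * (Real.sqrt (1 - (d i0)⁻¹ * d (i0.succAbove j)) : ℂ)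
  have key : V' * V'ᴴ = V * Vᴴ
      - (((d i0)⁻¹ : ℝ) : ℂ) • (Y * diagonal (fun i => (d i : ℂ)) * Yᴴ) := by
    rw [← hY]
    ext a b
    simp only [Matrix.sub_apply, Matrix.smul_apply, entry,
      Matrix.mul_apply (M := Y) (N := Yᴴ), Matrix.mul_apply (M := V'),
      conjTranspose_apply, smul_eq_mul, Finset.mul_sum]
    rw [← Finset.sum_sub_distrib, Fin.sum_univ_succAbove _ i0]
    have h0 : Y a i0 * star (Y b i0)
        - (((d i0)⁻¹ : ℝ) : ℂ) * (Y a i0 * (d i0 : ℂ) * star (Y b i0)) = 0 := by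
      have : (d i0 : ℂ) ≠ 0 := by exact_mod_cast hpos.ne'
      push_cast
      field_simp
      ring
    rw [h0, zero_add]
    refine Finset.sum_congr rfl fun j _ => ?_
    have hs : 0 ≤ 1 - (d i0)⁻¹ * d (i0.succAbove j) := by
      have := hi0 (i0.succAbove j)
      rw [sub_nonneg, inv_mul_le_iff₀ hpos]
      linarith
    have hsq := Real.mul_self_sqrt hs
    have hsq' := congrArg (fun x : ℝ => (x : ℂ)) hsq
    simp only [V', Matrix.of_apply, star_mul', Complex.star_def, Complex.conj_ofReal]
    push_cast at hsq' ⊢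
    linear_combination (Y a (i0.succAbove j) * (starRingEnd ℂ) (Y b (i0.succAbove j))) * hsq'
  refine ⟨V', fun k => ?_, ?_⟩
  · rw [key, Matrix.mul_sub, trace_sub, Matrix.mul_smul, trace_smul, hk k]
    simp
  · rw [key, trace_sub, trace_smul, smul_eq_mul, Complex.sub_re, Complex.re_ofReal_mul]
    have := mul_nonneg (inv_nonneg.2 hpos.le) ht
    linarith

lemma reduce {m : ℕ} {ι : Type} [Fintype ι] (G : ι → Matrix (Fin m) (Fin m) ℂ)
    (hG : ∀ k, (G k).IsHermitian) (n : ℕ) (V : Matrix (Fin m) (Fin n) ℂ) :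
    ∃ N ≤ Nat.sqrt (Fintype.card ι), ∃ V' : Matrix (Fin m) (Fin N) ℂ,
      (∀ k, trace (G k * (V' * V'ᴴ)) = trace (G k * (V * Vᴴ))) ∧
      (trace (V' * V'ᴴ)).re ≤ (trace (V * Vᴴ)).re := by
  induction n with
  | zero => exact ⟨0, Nat.zero_le _, V, fun _ => rfl, le_rfl⟩
  | succ n ih =>
    by_cases h : n + 1 ≤ Nat.sqrt (Fintype.card ι)
    · exact ⟨n + 1, h, V, fun _ => rfl, le_rfl⟩
    · obtain ⟨W, h1, h2⟩ := step G hG V (Nat.sqrt_lt.1 (not_le.1 h))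
      obtain ⟨N, hN, V', h3, h4⟩ := ih W
      exact ⟨N, hN, V', fun k => (h3 k).trans (h1 k), h4.trans h2⟩

lemma card_pairs (L : ℕ) :
    Fintype.card {p : Fin L × Fin L // p.1 ≤ p.2} = L * (L + 1) / 2 := by
  rw [Fintype.card_subtype, Finset.card_filter, Fintype.sum_prod_type_right]
  have : ∀ y : Fin L, (∑ x : Fin L, if x ≤ y then 1 else 0) = (y : ℕ) + 1 := by
    intro y
    rw [← Finset.card_filter]
    have : Finset.univ.filter (fun x : Fin L => x ≤ y) = Finset.Iic y := by
      ext
      simp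
    rw [this, Fin.card_Iic]
  simp only [this]
  rw [Fin.sum_univ_eq_sum_range (fun i => i + 1) L]
  have h := Finset.sum_range_id (L + 1)
  rw [Finset.sum_range_succ'] at h
  simp only [add_zero, Nat.add_sub_cancel] at h
  rw [h, mul_comm]

/-- MIMO radar (no communication users), BCRB metric for `L` real parameters:
at most `⌊√(L(L+1)/2)⌋` beamformers achieve the same Bayesian Fisher information
as a full set of `N_T` beamformers, within the same power budget. -/
theorem radar_bound_BCRB
    (NT L : ℕ) (hNT : 1 ≤ NT) (hL : 1 ≤ L)
    (P : ℝ) (hP : 0 < P)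
    (G : Fin L → Fin L → Matrix (Fin NT) (Fin NT) ℂ)
    (hG : ∀ i j : Fin L, i ≤ j → (G i j).IsHermitian)
    (Vhat : Matrix (Fin NT) (Fin NT) ℂ)
    (hpow : (Matrix.trace (Vhat * Vhatᴴ)).re ≤ P) :
    ∃ N : ℕ, N ≤ Nat.sqrt (L * (L + 1) / 2) ∧
      ∃ V' : Matrix (Fin NT) (Fin N) ℂ,
        (∀ i j : Fin L, i ≤ j →
          Matrix.trace (G i j * (V' * V'ᴴ)) = Matrix.trace (G i j * (Vhat * Vhatᴴ))) ∧
        (Matrix.trace (V' * V'ᴴ)).re ≤ P := by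
  obtain ⟨N, hN, V', h1, h2⟩ := reduce
    (fun p : {p : Fin L × Fin L // p.1 ≤ p.2} => G p.1.1 p.1.2)
    (fun p => hG _ _ p.2) NT Vhat
  rw [card_pairs] at hN
  exact ⟨N, hN, V', fun i j hij => h1 ⟨(i, j), hij⟩, h2.trans hpow⟩

end
end

section
/- Let N_T ≥ 1 and d ≥ 1 be natural numbers, let P > 0, and let Q_1,…,Q_d ∈ ℂ^{N_T×N_T} be linearly independent Hermitian matrices. For any V̂ ∈ ℂ^{N_T×N_T} with Tr(V̂ V̂^H) ≤ P, there exist a natural number N ≤ ⌊√d⌋ and a matrix V' ∈ ℂ^{N_T×N} such that Tr(Q_i V' V'^H) = Tr(Q_i V̂ V̂^H) for all i = 1,…,d and Tr(V' V'^H) ≤ P. In other words, in a MIMO radar system whose sensing performance is a d-quadratic metric, at most ⌊√d⌋ beamformers achieve the same performance as a full set of N_T beamformers. -/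
open Matrix Finset

noncomputable section

theorem rb_weights0 {n : ℕ} (l b : Fin n → ℝ) (hpos : ∃ j, 0 < l j)
    (hc : 0 ≤ ∑ j, l j * b j) :
    ∃ (t : ℝ) (j0 : Fin n), (∀ j, 0 ≤ 1 - t * l j) ∧ 1 - t * l j0 = 0 ∧
      0 ≤ t * ∑ j, l j * b j := by
  obtain ⟨j, hj⟩ := hpos
  obtain ⟨j0, -, hmax⟩ := Finset.exists_max_image Finset.univ l ⟨j, Finset.mem_univ j⟩
  have h0 : 0 < l j0 := lt_of_lt_of_le hj (hmax j (Finset.mem_univ j))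
  refine ⟨(l j0)⁻¹, j0, ?_, ?_, ?_⟩
  · intro k
    have := hmax k (Finset.mem_univ k)
    have h2 : (l j0)⁻¹ * l k ≤ (l j0)⁻¹ * l j0 :=
      mul_le_mul_of_nonneg_left this (inv_nonneg.mpr h0.le)
    rw [inv_mul_cancel₀ h0.ne'] at h2
    linarith
  · rw [inv_mul_cancel₀ h0.ne']; ring
  · positivity

theorem rb_weights {n : ℕ} (l b : Fin n → ℝ) (hl : l ≠ 0) (hb : ∀ j, 0 ≤ b j) :
    ∃ (t : ℝ) (j0 : Fin n), (∀ j, 0 ≤ 1 - t * l j) ∧ 1 - t * l j0 = 0 ∧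
      0 ≤ t * ∑ j, l j * b j := by
  have hneg : (∃ j, l j < 0) → (∑ j, l j * b j ≤ 0) → ∃ (t : ℝ) (j0 : Fin n),
      (∀ j, 0 ≤ 1 - t * l j) ∧ 1 - t * l j0 = 0 ∧ 0 ≤ t * ∑ j, l j * b j := by
    rintro ⟨j, hj⟩ hc
    obtain ⟨t, j0, h1, h2, h3⟩ := rb_weights0 (fun j => - l j) b ⟨j, by simpa using hj⟩
      (by simpa using hc)
    refine ⟨-t, j0, ?_, ?_, ?_⟩
    · intro k; have := h1 k; linarith
    · linarith
    · simpa using h3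
  by_cases hp : ∃ j, 0 < l j
  · by_cases hc : 0 ≤ ∑ j, l j * b j
    · exact rb_weights0 l b hp hc
    · push Not at hc
      refine hneg ?_ hc.le
      by_contra hcon
      push Not at hcon
      have : 0 ≤ ∑ j, l j * b j := Finset.sum_nonneg fun j _ => mul_nonneg (hcon j) (hb j)
      linarith
  · push Not at hp
    refine hneg ?_ (Finset.sum_nonpos fun j _ => mul_nonpos_of_nonpos_of_nonneg (hp j) (hb j))
    by_contra hcon
    push Not at hcon
    exact hl (funext fun j => le_antisymm (hp j) (hcon j))

theorem rb_drop {m n : ℕ} (V : Matrix (Fin m) (Fin (n+1)) ℂ) (w : Fin (n+1) → ℝ)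
    (hw : ∀ j, 0 ≤ w j) (j0 : Fin (n+1)) (h0 : w j0 = 0) :
    ∃ V' : Matrix (Fin m) (Fin n) ℂ,
      V' * V'ᴴ = V * Matrix.diagonal (fun j => (w j : ℂ)) * Vᴴ := by
  refine ⟨Matrix.of fun i k => V i (j0.succAbove k) * (Real.sqrt (w (j0.succAbove k)) : ℂ), ?_⟩
  ext a b
  rw [Matrix.mul_apply, Matrix.mul_apply]
  simp only [Matrix.mul_diagonal, Matrix.conjTranspose_apply, Matrix.of_apply]
  rw [Fin.sum_univ_succAbove (fun j => V a j * (w j : ℂ) * star (V b j)) j0]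
  simp only [h0, Complex.ofReal_zero, mul_zero, zero_mul, zero_add]
  refine Finset.sum_congr rfl fun k _ => ?_
  have : ((Real.sqrt (w (j0.succAbove k)) : ℂ)) * (Real.sqrt (w (j0.succAbove k)) : ℂ)
      = (w (j0.succAbove k) : ℂ) := by
    rw [← Complex.ofReal_mul, Real.mul_self_sqrt (hw _)]
  rw [star_mul', ← this]
  simp only [Complex.star_def, Complex.conj_ofReal]
  ring

/-- Hermitian matrix parametrised by a real matrix. -/
def rbH {n : ℕ} (A : Matrix (Fin n) (Fin n) ℝ) : Matrix (Fin n) (Fin n) ℂ :=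
  Matrix.of fun i j => ⟨A i j + A j i, A i j - A j i⟩

theorem rbH_herm {n : ℕ} (A : Matrix (Fin n) (Fin n) ℝ) : (rbH A).IsHermitian := by
  ext i j
  apply Complex.ext <;> simp [rbH, Matrix.conjTranspose_apply]
  ring

theorem rbH_add {n : ℕ} (A B : Matrix (Fin n) (Fin n) ℝ) : rbH (A + B) = rbH A + rbH B := by
  ext i j
  apply Complex.ext <;> simp [rbH] <;> ring

theorem rbH_smul {n : ℕ} (c : ℝ) (A : Matrix (Fin n) (Fin n) ℝ) :
    rbH (c • A) = (c : ℂ) • rbH A := by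
  ext i j
  apply Complex.ext <;> simp [rbH] <;> ring

theorem rbH_zero {n : ℕ} (A : Matrix (Fin n) (Fin n) ℝ) (h : rbH A = 0) : A = 0 := by
  ext i j
  have h1 := congrFun (congrFun h i) j
  have h2 := congrArg Complex.re h1
  have h3 := congrArg Complex.im h1
  simp [rbH] at h2 h3
  simp
  linarith

theorem rb_exists_X {m n d : ℕ} (hd : d < n * n) (Q : Fin d → Matrix (Fin m) (Fin m) ℂ)
    (hQ : ∀ i, (Q i).IsHermitian) (V : Matrix (Fin m) (Fin n) ℂ) :
    ∃ X : Matrix (Fin n) (Fin n) ℂ, X.IsHermitian ∧ X ≠ 0 ∧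
      ∀ i, Matrix.trace (Q i * (V * X * Vᴴ)) = 0 := by
  let L : Matrix (Fin n) (Fin n) ℝ →ₗ[ℝ] (Fin d → ℝ) :=
    { toFun := fun A i => (Matrix.trace (Q i * (V * rbH A * Vᴴ))).re
      map_add' := by
        intro A B
        funext i
        simp [rbH_add, Matrix.mul_add, Matrix.add_mul]
      map_smul' := by
        intro c A
        funext i
        simp [rbH_smul] }
  have hker : LinearMap.ker L ≠ ⊥ := by
    apply LinearMap.ker_ne_bot_of_finrank_lt
    simpa [Module.finrank_matrix] using hd
  obtain ⟨A, hA, hA0⟩ := (Submodule.ne_bot_iff _).mp hker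
  refine ⟨rbH A, rbH_herm A, fun h => hA0 (rbH_zero A h), fun i => ?_⟩
  have hre : (Matrix.trace (Q i * (V * rbH A * Vᴴ))).re = 0 := congrFun hA i
  have hst : star (Matrix.trace (Q i * (V * rbH A * Vᴴ)))
      = Matrix.trace (Q i * (V * rbH A * Vᴴ)) := by
    rw [← Matrix.trace_conjTranspose]
    simp only [Matrix.conjTranspose_mul, Matrix.conjTranspose_conjTranspose, (hQ i).eq,
      (rbH_herm A).eq]
    rw [Matrix.trace_mul_comm, Matrix.mul_assoc V]
  exact Complex.ext hre (Complex.conj_eq_iff_im.mp hst)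

theorem rb_reduce {m n d : ℕ} (hd : d < (n+1) * (n+1)) (Q : Fin d → Matrix (Fin m) (Fin m) ℂ)
    (hQ : ∀ i, (Q i).IsHermitian) (V : Matrix (Fin m) (Fin (n+1)) ℂ) :
    ∃ V' : Matrix (Fin m) (Fin n) ℂ,
      (∀ i, Matrix.trace (Q i * (V' * V'ᴴ)) = Matrix.trace (Q i * (V * Vᴴ))) ∧
      (Matrix.trace (V' * V'ᴴ)).re ≤ (Matrix.trace (V * Vᴴ)).re := by
  obtain ⟨X, hX, hX0, hXQ⟩ := rb_exists_X hd Q hQ V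
  set U : Matrix (Fin (n+1)) (Fin (n+1)) ℂ := hX.eigenvectorUnitary.1 with hU
  set l := hX.eigenvalues with hl
  have hUU : U * Uᴴ = 1 := Unitary.mul_star_self_of_mem hX.eigenvectorUnitary.2
  have hspec : X = U * Matrix.diagonal (fun j => (l j : ℂ)) * Uᴴ := by
    have := hX.spectral_theorem
    rw [Unitary.conjStarAlgAut_apply] at this
    exact this
  have hl0 : l ≠ 0 := by
    intro h
    apply hX0
    rw [hspec, h]
    simp
  set W := V * U with hW
  have hWW : W * Wᴴ = V * Vᴴ := by
    rw [hW, Matrix.conjTranspose_mul, Matrix.mul_assoc, ← Matrix.mul_assoc U, hUU, Matrix.one_mul]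
  have hWX : W * Matrix.diagonal (fun j => (l j : ℂ)) * Wᴴ = V * X * Vᴴ := by
    rw [hspec, hW, Matrix.conjTranspose_mul]
    simp only [Matrix.mul_assoc]
  have hb : ∀ j, 0 ≤ ((Wᴴ * W) j j).re := by
    intro j
    simp only [Matrix.mul_apply, Matrix.conjTranspose_apply, Complex.re_sum]
    refine Finset.sum_nonneg fun k _ => ?_
    simp [Complex.mul_re]
    nlinarith [sq_nonneg (W k j).re, sq_nonneg (W k j).im]
  obtain ⟨t, j0, h1, h2, h3⟩ := rb_weights l (fun j => ((Wᴴ * W) j j).re) hl0 hb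
  obtain ⟨V', hV'⟩ := rb_drop W (fun j => 1 - t * l j) h1 j0 h2
  have htr : (Matrix.trace (V * X * Vᴴ)).re = ∑ j, l j * ((Wᴴ * W) j j).re := by
    rw [← hWX, Matrix.mul_assoc, Matrix.trace_mul_comm, Matrix.mul_assoc, Matrix.trace]
    simp [Matrix.diagonal_mul]
  have hdiag : Matrix.diagonal (fun j => ((1 - t * l j : ℝ) : ℂ))
      = 1 - (t : ℂ) • Matrix.diagonal (fun j => (l j : ℂ)) := by
    rw [← Matrix.diagonal_one, ← Matrix.diagonal_smul, Matrix.diagonal_sub]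
    congr 1
    funext j
    simp
  have hfin : V' * V'ᴴ = V * Vᴴ - (t : ℂ) • (V * X * Vᴴ) := by
    rw [hV', hdiag, Matrix.mul_sub, Matrix.sub_mul, Matrix.mul_one, hWW, Matrix.mul_smul,
      Matrix.smul_mul, hWX]
  refine ⟨V', fun i => ?_, ?_⟩
  · rw [hfin, Matrix.mul_sub, Matrix.trace_sub, Matrix.mul_smul, Matrix.trace_smul, hXQ i]
    simp
  · rw [hfin, Matrix.trace_sub, Matrix.trace_smul, smul_eq_mul, Complex.sub_re,
      Complex.re_ofReal_mul, htr]
    linarith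

theorem rb_all {m d : ℕ} (Q : Fin d → Matrix (Fin m) (Fin m) ℂ)
    (hQ : ∀ i, (Q i).IsHermitian) (n : ℕ) : ∀ (V : Matrix (Fin m) (Fin n) ℂ),
    ∃ N : ℕ, N ≤ Nat.sqrt d ∧ ∃ V' : Matrix (Fin m) (Fin N) ℂ,
      (∀ i, Matrix.trace (Q i * (V' * V'ᴴ)) = Matrix.trace (Q i * (V * Vᴴ))) ∧
      (Matrix.trace (V' * V'ᴴ)).re ≤ (Matrix.trace (V * Vᴴ)).re := by
  induction n with
  | zero => exact fun V => ⟨0, Nat.zero_le _, V, fun _ => rfl, le_rfl⟩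
  | succ n ih =>
    intro V
    by_cases h : n + 1 ≤ Nat.sqrt d
    · exact ⟨n + 1, h, V, fun _ => rfl, le_rfl⟩
    · obtain ⟨V1, h1, h2⟩ := rb_reduce (Nat.sqrt_lt.mp (not_le.mp h)) Q hQ V
      obtain ⟨N, hN, V2, h3, h4⟩ := ih V1
      exact ⟨N, hN, V2, fun i => (h3 i).trans (h1 i), h4.trans h2⟩

/-- MIMO radar (no communication users), `d`-quadratic sensing metric:
at most `⌊√d⌋` beamformers achieve the same performance as a full set of `N_T`
beamformers, within the same power budget. -/
theorem radar_bound_d_quadratic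
    (NT d : ℕ) (hNT : 1 ≤ NT) (hd : 1 ≤ d)
    (P : ℝ) (hP : 0 < P)
    (Q : Fin d → Matrix (Fin NT) (Fin NT) ℂ)
    (hQherm : ∀ i, (Q i).IsHermitian) (hQli : LinearIndependent ℝ Q)
    (Vhat : Matrix (Fin NT) (Fin NT) ℂ)
    (hpow : (Matrix.trace (Vhat * Vhatᴴ)).re ≤ P) :
    ∃ N : ℕ, N ≤ Nat.sqrt d ∧
      ∃ V' : Matrix (Fin NT) (Fin N) ℂ,
        (∀ i : Fin d,
          Matrix.trace (Q i * (V' * V'ᴴ)) = Matrix.trace (Q i * (Vhat * Vhatᴴ))) ∧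
        (Matrix.trace (V' * V'ᴴ)).re ≤ P := by
  obtain ⟨N, hN, V', h1, h2⟩ := rb_all Q hQherm NT Vhat
  exact ⟨N, hN, V', h1, h2.trans hpow⟩

end
end

section
/- Let K ≥ 1, let h_1,…,h_K ∈ ℂ^{N_T}, let γ_1,…,γ_K > 0 and σ² > 0. Suppose R, R_1,…,R_K ∈ ℂ^{N_T×N_T} are positive semidefinite matrices such that R − Σ_{k=1}^K R_k is positive semidefinite and, for every k, (1/γ_k) h_k^H R_k h_k − Σ_{n≠k} h_k^H R_n h_k ≥ σ². Then there exist positive semidefinite matrices R̃_1,…,R̃_K, each of rank at most one, such that R − Σ_{k=1}^K R̃_k is positive semidefinite, h_k^H R̃_k h_k = h_k^H R_k h_k for every k, R_k − R̃_k is positive semidefinite for every k, and (1/γ_k) h_k^H R̃_k h_k − Σ_{n≠k} h_k^H R̃_n h_k ≥ σ² for every k. (This is the tightness of the semidefinite relaxation of the interference-cancellation ISAC beamforming problem: any feasible high-rank solution can be replaced by a rank-one solution with the same overall covariance R, hence the same power and the same Bayesian Fisher information.) -/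
open Matrix Finset
open scoped ComplexOrder

noncomputable section

theorem rank_one_reduction {m : ℕ} (A : Matrix (Fin m) (Fin m) ℂ) (hA : A.PosSemidef)
    (v : Fin m → ℂ) :
    ∃ B : Matrix (Fin m) (Fin m) ℂ, B.PosSemidef ∧ B.rank ≤ 1 ∧
      star v ⬝ᵥ B *ᵥ v = star v ⬝ᵥ A *ᵥ v ∧ (A - B).PosSemidef := by
  obtain ⟨w, hw⟩ : ∃ w, w = A *ᵥ v := ⟨_, rfl⟩
  obtain ⟨c, hc⟩ : ∃ c, c = star v ⬝ᵥ w := ⟨_, rfl⟩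
  have hc0 : 0 ≤ c := by rw [hc, hw]; exact hA.dotProduct_mulVec_nonneg v
  have hcs : star c = c := (IsSelfAdjoint.of_nonneg hc0)
  have hsw : star v ᵥ* A = star w := by
    rw [hw, star_mulVec, hA.isHermitian.eq]
  have hwv : star w ⬝ᵥ v = c := by
    rw [← hsw, ← dotProduct_mulVec, ← hw, hc]
  have hci : 0 ≤ c⁻¹ := by
    rcases eq_or_ne c 0 with h0 | h0
    · simp [h0]
    · have := mul_nonneg (star_mul_self_nonneg c⁻¹) hc0
      rwa [star_inv₀, hcs, mul_assoc, inv_mul_cancel₀ h0, mul_one] at this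
  have hccc : c⁻¹ * c⁻¹ * c = c⁻¹ := by
    rcases eq_or_ne c 0 with h0 | h0
    · simp [h0]
    · field_simp
  refine ⟨c⁻¹ • vecMulVec w (star w), (posSemidef_vecMulVec_self_star w).smul hci, ?_, ?_, ?_⟩
  · rw [← smul_vecMulVec]
    exact rank_vecMulVec_le _ _
  · rw [← hw, ← hc, smul_mulVec, vecMulVec_mulVec, hwv, dotProduct_smul, dotProduct_smul, ← hc]
    rcases eq_or_ne c 0 with h0 | h0
    · simp [h0]
    · simp [h0]
  · have key := hA.conjTranspose_mul_mul_same (1 - c⁻¹ • vecMulVec v (star w))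
    convert key using 1
    have e : (1 - c⁻¹ • vecMulVec v (star w))ᴴ = 1 - c⁻¹ • vecMulVec w (star v) := by
      rw [conjTranspose_sub, conjTranspose_smul, conjTranspose_vecMulVec, star_inv₀, hcs,
        star_star, conjTranspose_one]
    rw [e, sub_mul, one_mul, smul_mul_assoc, vecMulVec_mul, hsw, mul_sub, mul_one, sub_mul,
      mul_smul_comm, mul_vecMulVec, ← hw, mul_smul_comm, smul_mul_assoc, vecMulVec_mul_vecMulVec,
      hwv, vecMulVec_smul, smul_smul, smul_smul, hccc]
    abel

/-- Tightness of the semidefinite relaxation of the interference-cancellation ISAC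
beamforming problem: any feasible solution can be replaced by one where each user's
covariance has rank at most one, keeping the same overall covariance `R`. -/
theorem sdr_tight_IC
    (NT K : ℕ) (hK : 1 ≤ K)
    (h : Fin K → (Fin NT → ℂ))
    (γ : Fin K → ℝ) (hγ : ∀ k, 0 < γ k)
    (σ2 : ℝ) (hσ2 : 0 < σ2)
    (R : Matrix (Fin NT) (Fin NT) ℂ) (Rk : Fin K → Matrix (Fin NT) (Fin NT) ℂ)
    (hR : R.PosSemidef) (hRk : ∀ k, (Rk k).PosSemidef)
    (hdom : (R - ∑ k, Rk k).PosSemidef)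
    (hSINR : ∀ k : Fin K,
      σ2 ≤ (1 / γ k) * (star (h k) ⬝ᵥ (Rk k) *ᵥ h k).re
            - ∑ n ∈ univ.erase k, (star (h k) ⬝ᵥ (Rk n) *ᵥ h k).re) :
    ∃ Rt : Fin K → Matrix (Fin NT) (Fin NT) ℂ,
      (∀ k, (Rt k).PosSemidef) ∧
      (∀ k, (Rt k).rank ≤ 1) ∧
      (R - ∑ k, Rt k).PosSemidef ∧
      (∀ k, star (h k) ⬝ᵥ (Rt k) *ᵥ h k = star (h k) ⬝ᵥ (Rk k) *ᵥ h k) ∧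
      (∀ k, (Rk k - Rt k).PosSemidef) ∧
      (∀ k : Fin K,
        σ2 ≤ (1 / γ k) * (star (h k) ⬝ᵥ (Rt k) *ᵥ h k).re
              - ∑ n ∈ univ.erase k, (star (h k) ⬝ᵥ (Rt n) *ᵥ h k).re) := by
  choose Rt h1 h2 h3 h4 using fun k => rank_one_reduction (Rk k) (hRk k) (h k)
  refine ⟨Rt, h1, h2, ?_, h3, h4, fun k => ?_⟩
  · have := hdom.add (posSemidef_sum univ (fun k _ => h4 k))
    convert this using 1
    rw [Finset.sum_sub_distrib]
    abel
  · refine (hSINR k).trans ?_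
    rw [h3 k]
    refine sub_le_sub_left (Finset.sum_le_sum fun n _ => ?_) _
    have := (Complex.le_def.1 ((h4 n).dotProduct_mulVec_nonneg (h k))).1
    rw [sub_mulVec, dotProduct_sub, Complex.sub_re, Complex.zero_re] at this
    linarith

end
end

section
/- Let K ≥ 1, let h_1,…,h_K ∈ ℂ^{N_T}, let γ_1,…,γ_K > 0 and σ² > 0. Suppose R, R_1,…,R_K ∈ ℂ^{N_T×N_T} are positive semidefinite matrices such that R − Σ_{k=1}^K R_k is positive semidefinite and, for every k, (1 + 1/γ_k) h_k^H R_k h_k − h_k^H R h_k ≥ σ². Then there exist positive semidefinite matrices R̃_1,…,R̃_K, each of rank at most one, such that R − Σ_{k=1}^K R̃_k is positive semidefinite, h_k^H R̃_k h_k = h_k^H R_k h_k for every k, R_k − R̃_k is positive semidefinite for every k, and (1 + 1/γ_k) h_k^H R̃_k h_k − h_k^H R h_k ≥ σ² for every k. (This is the tightness of the semidefinite relaxation of the no-interference-cancellation ISAC beamforming problem.) -/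
open Matrix Finset
open scoped ComplexOrder

noncomputable section

/-- Single-matrix rank-one reduction. -/
lemma rank_one_red {n : ℕ} (A : Matrix (Fin n) (Fin n) ℂ) (hA : A.PosSemidef) (h : Fin n → ℂ) :
    ∃ B : Matrix (Fin n) (Fin n) ℂ, B.PosSemidef ∧ B.rank ≤ 1 ∧
      star h ⬝ᵥ B *ᵥ h = star h ⬝ᵥ A *ᵥ h ∧ (A - B).PosSemidef := by
  obtain ⟨c, hc⟩ : ∃ c, c = star h ⬝ᵥ A *ᵥ h := ⟨_, rfl⟩
  obtain ⟨w, hw⟩ : ∃ w, w = A *ᵥ h := ⟨_, rfl⟩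
  have hc0 : 0 ≤ c := hc ▸ hA.dotProduct_mulVec_nonneg h
  have hci : 0 ≤ c⁻¹ := inv_nonneg.2 hc0
  have hsc : star c = c := (IsSelfAdjoint.of_nonneg hc0).star_eq
  have hsci : star c⁻¹ = c⁻¹ := (IsSelfAdjoint.of_nonneg hci).star_eq
  have hhw : star h ⬝ᵥ w = c := by rw [hw, hc]
  have hwh : star w ⬝ᵥ h = c := by
    rw [← hsc, ← hhw, star_dotProduct]
  have hwA : star h ᵥ* A = star w := by
    rw [hw, star_mulVec, hA.isHermitian.eq]
  have hccc : c * (c⁻¹ * c⁻¹) = c⁻¹ := by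
    by_cases hz : c = 0
    · simp [hz]
    · field_simp
  refine ⟨c⁻¹ • vecMulVec w (star w), (posSemidef_vecMulVec_self_star w).smul hci, ?_, ?_, ?_⟩
  · rw [← smul_vecMulVec]
    exact rank_vecMulVec_le _ _
  · rw [← hc, smul_mulVec, vecMulVec_mulVec, hwh, dotProduct_smul, dotProduct_smul, hhw]
    by_cases hz : c = 0
    · simp [hz]
    · simp [hz]
  · have key := hA.conjTranspose_mul_mul_same (1 - c⁻¹ • vecMulVec h (star w))
    convert key using 1
    have e1 : (c⁻¹ • vecMulVec h (star w))ᴴ = c⁻¹ • vecMulVec w (star h) := by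
      rw [conjTranspose_smul, hsci, conjTranspose_vecMulVec, star_star]
    rw [conjTranspose_sub, e1, conjTranspose_one]
    simp only [sub_mul, mul_sub, one_mul, mul_one, smul_mul_assoc, mul_smul_comm,
      mul_vecMulVec, vecMulVec_mul, hwA, ← hw, vecMulVec_mulVec, hwh, op_smul_eq_smul,
      smul_vecMulVec, smul_smul]
    have e2 : c⁻¹ * (c⁻¹ * c) = c⁻¹ := by rw [← mul_assoc, mul_comm, hccc]
    rw [smul_sub, smul_smul, e2, sub_self, sub_zero]

/-- Tightness of the semidefinite relaxation of the no-interference-cancellation ISAC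
beamforming problem: any feasible solution can be replaced by one where each user's
covariance has rank at most one, keeping the same overall covariance `R`. -/
theorem sdr_tight_NIC
    (NT K : ℕ) (hK : 1 ≤ K)
    (h : Fin K → (Fin NT → ℂ))
    (γ : Fin K → ℝ) (hγ : ∀ k, 0 < γ k)
    (σ2 : ℝ) (hσ2 : 0 < σ2)
    (R : Matrix (Fin NT) (Fin NT) ℂ) (Rk : Fin K → Matrix (Fin NT) (Fin NT) ℂ)
    (hR : R.PosSemidef) (hRk : ∀ k, (Rk k).PosSemidef)
    (hdom : (R - ∑ k, Rk k).PosSemidef)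
    (hSINR : ∀ k : Fin K,
      σ2 ≤ (1 + 1 / γ k) * (star (h k) ⬝ᵥ (Rk k) *ᵥ h k).re
            - (star (h k) ⬝ᵥ R *ᵥ h k).re) :
    ∃ Rt : Fin K → Matrix (Fin NT) (Fin NT) ℂ,
      (∀ k, (Rt k).PosSemidef) ∧
      (∀ k, (Rt k).rank ≤ 1) ∧
      (R - ∑ k, Rt k).PosSemidef ∧
      (∀ k, star (h k) ⬝ᵥ (Rt k) *ᵥ h k = star (h k) ⬝ᵥ (Rk k) *ᵥ h k) ∧
      (∀ k, (Rk k - Rt k).PosSemidef) ∧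
      (∀ k : Fin K,
        σ2 ≤ (1 + 1 / γ k) * (star (h k) ⬝ᵥ (Rt k) *ᵥ h k).re
              - (star (h k) ⬝ᵥ R *ᵥ h k).re) := by
  choose Rt h1 h2 h3 h4 using fun k => rank_one_red (Rk k) (hRk k) (h k)
  refine ⟨Rt, h1, h2, ?_, h3, h4, fun k => ?_⟩
  · have := hdom.add (posSemidef_sum Finset.univ (fun k _ => h4 k))
    rw [Finset.sum_sub_distrib, sub_add_sub_cancel] at this
    exact this
  · rw [h3 k]
    exact hSINR k

end
end

section
/- Let A_1,…,A_d ∈ ℂ^{n×n} be Hermitian matrices and let R ∈ ℂ^{n×n} be a positive semidefinite matrix whose rank r satisfies r² > d. Then there exists a positive semidefinite matrix R' ∈ ℂ^{n×n} with rank(R') < r such that Tr(A_i R') = Tr(A_i R) for every i = 1,…,d. (Rank-reduction step for complex semidefinite programs: writing R = V V^H with V ∈ ℂ^{n×r}, one finds a nonzero Hermitian M ∈ ℂ^{r×r} annihilating the d real-linear functionals M ↦ Tr(V^H A_i V M), scales it so that I_r − M is positive semidefinite and singular, and sets R' = V (I_r − M) V^H.) -/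
open Matrix Finset
open scoped ComplexOrder

noncomputable section

/-- Spectral theorem in explicit form. -/
lemma aux_spectral {ι : Type*} [Fintype ι] [DecidableEq ι] (M : Matrix ι ι ℂ)
    (hM : M.IsHermitian) :
    ∃ U : Matrix ι ι ℂ, U * Uᴴ = 1 ∧
      M = U * diagonal (fun i => ((hM.eigenvalues i : ℝ) : ℂ)) * Uᴴ := by
  refine ⟨hM.eigenvectorUnitary, ?_, ?_⟩
  · exact Unitary.coe_mul_star_self hM.eigenvectorUnitary
  · have h := hM.spectral_theorem
    rw [Unitary.conjStarAlgAut_apply] at h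
    exact h

/-- A positive semidefinite matrix of rank `r` factors through an index type of size `r`. -/
lemma aux_factor {n : ℕ} (R : Matrix (Fin n) (Fin n) ℂ) (hR : R.PosSemidef) :
    ∃ V : Matrix (Fin n) (Fin R.rank) ℂ, R = V * Vᴴ := by
  obtain ⟨U, -, hU⟩ := aux_spectral R hR.1
  have e : {i // hR.1.eigenvalues i ≠ 0} ≃ Fin R.rank :=
    Fintype.equivFinOfCardEq hR.1.rank_eq_card_non_zero_eigs.symm
  refine ⟨Matrix.of fun j k => U j (e.symm k) *
    ((Real.sqrt (hR.1.eigenvalues (e.symm k)) : ℝ) : ℂ), ?_⟩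
  ext a b
  have h1 : R a b = ∑ i, U a i * ((hR.1.eigenvalues i : ℝ) : ℂ) * star (U b i) := by
    conv_lhs => rw [hU]
    rw [Matrix.mul_apply]
    simp only [Matrix.mul_diagonal, conjTranspose_apply]
  rw [h1, Matrix.mul_apply]
  simp only [conjTranspose_apply, of_apply]
  rw [e.symm.sum_comp (fun k : {i // hR.1.eigenvalues i ≠ 0} =>
    U a k * ((Real.sqrt (hR.1.eigenvalues k) : ℝ) : ℂ) *
      star (U b k * ((Real.sqrt (hR.1.eigenvalues k) : ℝ) : ℂ)))]
  have h2 : ∀ i, U a i * ((Real.sqrt (hR.1.eigenvalues i) : ℝ) : ℂ) *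
      star (U b i * ((Real.sqrt (hR.1.eigenvalues i) : ℝ) : ℂ)) =
      U a i * ((hR.1.eigenvalues i : ℝ) : ℂ) * star (U b i) := by
    intro i
    have h3 : ((Real.sqrt (hR.1.eigenvalues i) : ℝ) : ℂ) *
        ((Real.sqrt (hR.1.eigenvalues i) : ℝ) : ℂ) = ((hR.1.eigenvalues i : ℝ) : ℂ) := by
      rw [← Complex.ofReal_mul, Real.mul_self_sqrt (hR.eigenvalues_nonneg i)]
    rw [← h3, star_mul']
    simp only [RCLike.star_def, Complex.conj_ofReal]
    ring
  simp only [h2]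
  have h4 := Finset.sum_subtype (p := fun i => hR.1.eigenvalues i ≠ 0)
    (F := inferInstance) (Finset.univ.filter fun i => hR.1.eigenvalues i ≠ 0) (by simp)
    (fun i => U a i * ((hR.1.eigenvalues i : ℝ) : ℂ) * star (U b i))
  refine Eq.trans ?_ h4
  symm
  apply Finset.sum_subset (Finset.filter_subset _ _)
  intro i _ hi
  have h5 : hR.1.eigenvalues i = 0 := by simpa using hi
  rw [h5]
  simp

/-- A nonzero Hermitian matrix killed by `d < r ^ 2` trace functionals. -/
lemma aux_exists {r d : ℕ} (B : Fin d → Matrix (Fin r) (Fin r) ℂ)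
    (hB : ∀ i, (B i).IsHermitian) (h : d < r ^ 2) :
    ∃ M : Matrix (Fin r) (Fin r) ℂ, M.IsHermitian ∧ M ≠ 0 ∧ ∀ i, trace (B i * M) = 0 := by
  let f : Matrix (Fin r) (Fin r) ℂ →ₗ[ℂ] (Fin d → ℂ) :=
    LinearMap.pi fun i => (traceLinearMap (Fin r) ℂ ℂ).comp (LinearMap.mulLeft ℂ (B i))
  have hf : LinearMap.ker f ≠ ⊥ := by
    apply LinearMap.ker_ne_bot_of_finrank_lt
    simp [Module.finrank_matrix]
    nlinarith
  obtain ⟨M, hM, hM0⟩ := (Submodule.ne_bot_iff _).1 hf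
  have h1 : ∀ i, trace (B i * M) = 0 := fun i => congrFun (LinearMap.mem_ker.1 hM) i
  have h2 : ∀ i, trace (B i * Mᴴ) = 0 := by
    intro i
    have : (M * B i)ᴴ = B i * Mᴴ := by rw [conjTranspose_mul, (hB i).eq]
    rw [← this, trace_conjTranspose, trace_mul_comm, h1, star_zero]
  by_cases h0 : M + Mᴴ = 0
  · refine ⟨Complex.I • M, ?_, ?_, ?_⟩
    · have : Mᴴ = -M := by rw [eq_neg_iff_add_eq_zero, add_comm, h0]
      simp [IsHermitian, conjTranspose_smul, this]
    · simp [hM0]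
    · intro i
      simp [h1]
  · refine ⟨M + Mᴴ, ?_, h0, ?_⟩
    · simp [IsHermitian, add_comm]
    · intro i
      rw [mul_add, trace_add, h1, h2, add_zero]

/-- If a Hermitian matrix has a positive eigenvalue it can be scaled so that `1 - c M` is
positive semidefinite and singular. -/
lemma aux_scale_pos {r : ℕ} (M : Matrix (Fin r) (Fin r) ℂ) (hM : M.IsHermitian)
    (i₀ : Fin r) (hi : 0 < hM.eigenvalues i₀) :
    ∃ c : ℂ, (1 - c • M).PosSemidef ∧ (1 - c • M).rank < r := by
  obtain ⟨U, hU1, hU⟩ := aux_spectral M hM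
  obtain ⟨m, -, hm⟩ := Finset.exists_max_image Finset.univ hM.eigenvalues ⟨i₀, Finset.mem_univ _⟩
  have hpos : 0 < hM.eigenvalues m := hi.trans_le (hm _ (Finset.mem_univ _))
  have key : 1 - (((hM.eigenvalues m)⁻¹ : ℝ) : ℂ) • M =
      U * diagonal (fun i => ((1 - (hM.eigenvalues m)⁻¹ * hM.eigenvalues i : ℝ) : ℂ)) * Uᴴ := by
    have hd : diagonal (fun i => ((1 - (hM.eigenvalues m)⁻¹ * hM.eigenvalues i : ℝ) : ℂ)) =
        1 - (((hM.eigenvalues m)⁻¹ : ℝ) : ℂ) •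
          diagonal (fun i => ((hM.eigenvalues i : ℝ) : ℂ)) := by
      ext a b
      by_cases hab : a = b
      · subst hab; simp
      · simp [hab]
    rw [hd, mul_sub, sub_mul, mul_one, hU1, mul_smul_comm, smul_mul_assoc, ← hU]
  refine ⟨(((hM.eigenvalues m)⁻¹ : ℝ) : ℂ), ?_, ?_⟩
  · rw [key]
    apply PosSemidef.mul_mul_conjTranspose_same
    rw [posSemidef_diagonal_iff]
    intro i
    rw [Complex.zero_le_real, sub_nonneg, inv_mul_le_iff₀ hpos, mul_one]
    exact hm i (Finset.mem_univ _)
  · rw [key]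
    refine ((rank_mul_le_left _ _).trans (rank_mul_le_right _ _)).trans_lt ?_
    rw [rank_diagonal]
    calc _ < Fintype.card (Fin r) := Fintype.card_subtype_lt (x := m) (by
            simp [inv_mul_cancel₀ hpos.ne'])
      _ = r := Fintype.card_fin r

lemma aux_scale {r : ℕ} (M : Matrix (Fin r) (Fin r) ℂ) (hM : M.IsHermitian) (h0 : M ≠ 0) :
    ∃ c : ℂ, (1 - c • M).PosSemidef ∧ (1 - c • M).rank < r := by
  by_cases hp : ∃ i, 0 < hM.eigenvalues i
  · obtain ⟨i, hi⟩ := hp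
    exact aux_scale_pos M hM i hi
  by_cases hq : ∃ i, 0 < hM.neg.eigenvalues i
  · obtain ⟨i, hi⟩ := hq
    obtain ⟨c, hc⟩ := aux_scale_pos (-M) hM.neg i hi
    exact ⟨-c, by simpa using hc⟩
  exfalso
  push Not at hp hq
  have t1 := hM.trace_eq_sum_eigenvalues
  have t2 := hM.neg.trace_eq_sum_eigenvalues
  rw [trace_neg, t1] at t2
  have t3 : -∑ i, hM.eigenvalues i = ∑ i, hM.neg.eigenvalues i := by exact_mod_cast t2
  have s1 : ∑ i, hM.eigenvalues i ≤ 0 := Finset.sum_nonpos fun i _ => hp i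
  have s2 : ∑ i, hM.neg.eigenvalues i ≤ 0 := Finset.sum_nonpos fun i _ => hq i
  have s3 : ∑ i, hM.eigenvalues i = 0 := by linarith
  apply h0
  rw [← hM.eigenvalues_eq_zero_iff]
  ext i
  exact (Finset.sum_eq_zero_iff_of_nonpos fun i _ => hp i).1 s3 i (Finset.mem_univ _)

/-- Rank-reduction step for complex semidefinite programs: if `R` is positive
semidefinite with `(rank R)² > d`, then there is a positive semidefinite `R'` of
strictly smaller rank matching the `d` trace quantities `Tr(Aᵢ R)`. -/
theorem sdp_rank_reduction
    (n d : ℕ)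
    (A : Fin d → Matrix (Fin n) (Fin n) ℂ) (hA : ∀ i, (A i).IsHermitian)
    (R : Matrix (Fin n) (Fin n) ℂ) (hR : R.PosSemidef)
    (hrank : d < R.rank ^ 2) :
    ∃ R' : Matrix (Fin n) (Fin n) ℂ, R'.PosSemidef ∧ R'.rank < R.rank ∧
      ∀ i : Fin d, Matrix.trace (A i * R') = Matrix.trace (A i * R) := by
  obtain ⟨V, hV⟩ := aux_factor R hR
  obtain ⟨M, hM, hM0, hMt⟩ := aux_exists (fun i => Vᴴ * A i * V)
    (fun i => isHermitian_conjTranspose_mul_mul V (hA i)) hrank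
  obtain ⟨c, hc1, hc2⟩ := aux_scale M hM hM0
  refine ⟨V * (1 - c • M) * Vᴴ, hc1.mul_mul_conjTranspose_same V,
    ((rank_mul_le_left _ _).trans (rank_mul_le_right _ _)).trans_lt hc2, ?_⟩
  intro i
  have h1 : V * (1 - c • M) * Vᴴ = R - c • (V * M * Vᴴ) := by
    rw [Matrix.mul_sub, Matrix.sub_mul, Matrix.mul_one, ← hV, Matrix.mul_smul, Matrix.smul_mul]
  have h2 : trace (A i * (V * M * Vᴴ)) = 0 := by
    rw [← hMt i, ← Matrix.mul_assoc, trace_mul_comm]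
    simp only [Matrix.mul_assoc]
  rw [h1, mul_sub, trace_sub, mul_smul_comm, trace_smul, h2, smul_zero, sub_zero]

end
end

section
/- Let P > 0, a > 0 and b > 0 be real numbers with b − a > 2a². Then there exist real numbers β₁, β₂ > 0 with β₁ + β₂ ≤ P such that 2/β₁ + 1/(a β₁ + b β₂) < 2/P + 1/(a P). (This shows that, for estimating the complex path loss and angle of arrival of a single line-of-sight target with classical Cramér–Rao objective, splitting the transmit power between the steering direction a_T(θ) and its derivative direction ȧ_T(θ) strictly beats allocating all power along a_T(θ) whenever ‖ȧ_T(θ)‖² − ‖ȧ_R(θ)‖² > 2‖ȧ_R(θ)‖⁴; hence two beamformers are necessary and one beamformer is not sufficient in this regime.) -/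
/-- Splitting the transmit power between the steering direction and its derivative
direction strictly beats allocating all power along the steering direction whenever
`b − a > 2a²` (with `a = ‖ȧ_R‖²`, `b = ‖ȧ_T‖²`): there exist `β₁, β₂ > 0` with
`β₁ + β₂ ≤ P` such that `2/β₁ + 1/(aβ₁ + bβ₂) < 2/P + 1/(aP)`. Hence two beamformers
are necessary for jointly estimating the path loss and angle of a single target. -/
theorem two_beams_beat_one
    (P a b : ℝ) (hP : 0 < P) (ha : 0 < a) (hb : 0 < b)
    (hgap : 2 * a ^ 2 < b - a) :
    ∃ β1 β2 : ℝ, 0 < β1 ∧ 0 < β2 ∧ β1 + β2 ≤ P ∧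
      2 / β1 + 1 / (a * β1 + b * β2) < 2 / P + 1 / (a * P) := by
  obtain ⟨c, hc⟩ : ∃ c, c = b - a := ⟨_, rfl⟩
  have hbc : b = a + c := by linarith
  subst hbc
  have hgap' : 2 * a ^ 2 < c := by linarith
  have hcpos : 0 < c := by nlinarith [sq_nonneg a]
  have hD : 0 < 2 * (c * (2 * a + 1)) := by positivity
  obtain ⟨t, ht⟩ : ∃ t, t = (c - 2 * a ^ 2) / (2 * (c * (2 * a + 1))) := ⟨_, rfl⟩
  have ht0 : 0 < t := by
    rw [ht]
    exact div_pos (by linarith) hD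
  have htD : t * (2 * (c * (2 * a + 1))) = c - 2 * a ^ 2 := by
    rw [ht]
    exact div_mul_cancel₀ _ hD.ne'
  have ht1 : t < 1 := by
    rw [ht, div_lt_one hD]
    nlinarith [mul_pos hcpos ha, sq_nonneg a]
  have h1t : 0 < 1 - t := by linarith
  have hact : 0 < a + c * t := by positivity
  refine ⟨(1 - t) * P, t * P, by positivity, by positivity, by linarith, ?_⟩
  have hden : a * ((1 - t) * P) + (a + c) * (t * P) = (a + c * t) * P := by ring
  rw [hden, ← sub_pos]
  have key : 2 / P + 1 / (a * P) - (2 / ((1 - t) * P) + 1 / ((a + c * t) * P))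
      = t * (c * (1 - t) - 2 * a * (a + c * t)) / (a * (a + c * t) * (1 - t) * P) := by
    field_simp
    ring
  rw [key]
  have hnum : 0 < c * (1 - t) - 2 * a * (a + c * t) := by nlinarith
  positivity
end
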